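/- Let F be a maximal hke collection with α(F) = α. Then the relation ≈ on ⋃F (defined by x ≈ y iff x = y or there exist A, D ∈ F with A − D = {x} and D − A = {y}) is an equivalence relation with exactly α equivalence classes, each having exactly two elements, and F equals the collection of all subsets B of ⋃F with |B| = α that intersect every ≈-equivalence class; moreover |⋃F| = 2α. -/

import Mathlib

open Finset

/-- The union of a finite collection of finite sets. -/
def famUnion (Γ : Finset (Finset ℕ)) : Finset ℕ := Γ.sup id

/-- The intersection of a finite collection of finite sets
(equal to the usual intersection when the collection is nonempty). -/
def famInter (Γ : Finset (Finset ℕ)) : Finset ℕ :=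
  (Γ.sup id).filter (fun x => ∀ A ∈ Γ, x ∈ A)

/-- `F` is a hereditary König–Egerváry (hke) collection with `α(F) = α`:
`α` is a positive integer and `|⋃Γ| + |⋂Γ| = 2α` for every nonempty subcollection `Γ` of `F`. -/
def IsHKE (F : Finset (Finset ℕ)) (α : ℕ) : Prop :=
  0 < α ∧ ∀ Γ ⊆ F, Γ.Nonempty → (famUnion Γ).card + (famInter Γ).card = 2 * α

/-- `F` is a maximal hke collection: it is an hke collection and no collection
properly containing it is an hke collection. -/
def IsMaxHKE (F : Finset (Finset ℕ)) : Prop :=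
  (∃ α, IsHKE F α) ∧ ∀ F' : Finset (Finset ℕ), F ⊂ F' → ¬ ∃ β, IsHKE F' β

/-- The relation `≈` on `⋃F`: `x ≈ y` iff `x = y` or there are `A, D ∈ F`
with `A − D = {x}` and `D − A = {y}`. -/
def ApproxRel (F : Finset (Finset ℕ)) (x y : ℕ) : Prop :=
  x = y ∨ ∃ A ∈ F, ∃ D ∈ F, A \ D = {x} ∧ D \ A = {y}

instance (F : Finset (Finset ℕ)) (x y : ℕ) : Decidable (ApproxRel F x y) :=
  inferInstanceAs (Decidable (x = y ∨ ∃ A ∈ F, ∃ D ∈ F, A \ D = {x} ∧ D \ A = {y}))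

theorem fiber_card_eq {ι β : Type} [DecidableEq ι] [DecidableEq β] (F : Finset β) (U : Finset ι)
    (f g : ι → Finset β) (hf : ∀ x, f x ⊆ F) (hg : ∀ x, g x ⊆ F)
    (h : ∀ Γ ⊆ F, (U.filter (fun x => Γ ⊆ f x)).card = (U.filter (fun x => Γ ⊆ g x)).card) :
    ∀ n : ℕ, ∀ S ⊆ F, (F \ S).card = n →
      (U.filter (fun x => f x = S)).card = (U.filter (fun x => g x = S)).card := by
  intro n
  induction n using Nat.strong_induction_on with
  | _ n ih =>
  intro S hS hn
  have key : ∀ k : ι → Finset β, (∀ x, k x ⊆ F) →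
      (U.filter (fun x => S ⊆ k x)).card = (U.filter (fun x => k x = S)).card +
        ∑ T ∈ F.powerset.filter (fun T => S ⊂ T), (U.filter (fun x => k x = T)).card := by
    intro k hk
    have e : U.filter (fun x => S ⊆ k x) =
        U.filter (fun x => k x = S) ∪ U.filter (fun x => S ⊂ k x) := by
      ext x
      simp only [mem_filter, mem_union]
      rw [subset_iff_ssubset_or_eq (a := S)]
      grind
    rw [e, card_union_of_disjoint]
    · congr 1
      rw [card_eq_sum_card_fiberwise (f := k) (t := F.powerset.filter (fun T => S ⊂ T))]
      · refine sum_congr rfl ?_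
        intro T hT
        rw [filter_filter]
        congr 1
        ext x
        simp only [mem_filter, mem_powerset] at hT ⊢
        grind
      · intro x hx
        simp only [coe_filter, Set.mem_ofPred_eq, mem_powerset] at hx ⊢
        exact ⟨hk x, hx.2⟩
    · rw [disjoint_left]
      intro x hx hx'
      simp only [mem_filter] at hx hx'
      exact hx'.2.ne hx.2.symm
  have h1 := key f hf
  have h2 := key g hg
  have h3 : ∑ T ∈ F.powerset.filter (fun T => S ⊂ T), (U.filter (fun x => f x = T)).card =
      ∑ T ∈ F.powerset.filter (fun T => S ⊂ T), (U.filter (fun x => g x = T)).card := by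
    refine sum_congr rfl ?_
    intro T hT
    simp only [mem_filter, mem_powerset] at hT
    refine ih _ ?_ T hT.1 rfl
    rw [← hn]
    apply card_lt_card
    rw [Finset.ssubset_iff_subset_ne]
    refine ⟨sdiff_subset_sdiff le_rfl hT.2.subset, fun he => hT.2.ne ?_⟩
    rw [← Finset.sdiff_sdiff_eq_self hS, ← he, Finset.sdiff_sdiff_eq_self hT.1]
  have := h S hS
  omega

theorem exists_fiber_equiv {ι γ : Type} [DecidableEq γ] (s t : Finset ι) (f g : ι → γ)
    (h : ∀ c, (s.filter (fun x => f x = c)).card = (t.filter (fun x => g x = c)).card) :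
    ∃ e : s ≃ t, ∀ x, g (e x) = f x := by
  classical
  have e : ∀ c, {a : s // f a = c} ≃ {b : t // g b = c} := by
    intro c
    apply Fintype.equivOfCardEq
    have aux : ∀ (u : Finset ι) (k : ι → γ), Fintype.card {a : u // k a = c} =
        (u.filter (fun x => k x = c)).card := by
      intro u k
      rw [Fintype.card_subtype, ← card_map (Function.Embedding.subtype _)]
      congr 1
      ext x
      simp
      grind
    rw [aux, aux, h]
  refine ⟨Equiv.ofFiberEquiv (f := fun a : s => f a) (g := fun b : t => g b) e, ?_⟩
  intro x
  exact Equiv.ofFiberEquiv_map (f := fun a : s => f a) (g := fun b : t => g b) e x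

theorem mem_famUnion (Γ : Finset (Finset ℕ)) (x : ℕ) :
    x ∈ famUnion Γ ↔ ∃ A ∈ Γ, x ∈ A := by
  simp [famUnion, mem_sup]

theorem mem_famInter (Γ : Finset (Finset ℕ)) (h : Γ.Nonempty) (x : ℕ) :
    x ∈ famInter Γ ↔ ∀ A ∈ Γ, x ∈ A := by
  have := mem_famUnion Γ x
  unfold famUnion at this
  obtain ⟨A, hA⟩ := h
  unfold famInter
  rw [mem_filter, this]
  exact ⟨fun h => h.2, fun h => ⟨⟨A, hA, h A hA⟩, h⟩⟩

/-- Every nonempty hke collection consists of transversals of a pairing. -/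
theorem exists_pairing (F : Finset (Finset ℕ)) (α : ℕ) (hF : IsHKE F α) (A0 : Finset ℕ)
    (hA0 : A0 ∈ F) : ∃ (U : Finset ℕ) (σ : ℕ → ℕ), U.card = 2 * α ∧ (∀ A ∈ F, A ⊆ U) ∧
      (∀ x ∈ U, σ x ∈ U) ∧ (∀ x ∈ U, σ (σ x) = x) ∧
      ∀ x ∈ U, ∀ A ∈ F, (x ∈ A ↔ σ x ∉ A) := by
  obtain ⟨U, hU, hUc⟩ : ∃ U, famUnion F ⊆ U ∧ U.card = 2 * α := by
    apply Infinite.exists_superset_card_eq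
    have := hF.2 F (Subset.refl _) ⟨_, hA0⟩
    omega
  have hAU : ∀ A ∈ F, A ⊆ U := fun A hA x hx => hU ((mem_famUnion F x).2 ⟨A, hA, hx⟩)
  have hfib := fiber_card_eq F U (fun x => F.filter (fun A => x ∈ A))
    (fun x => F.filter (fun A => x ∉ A)) (fun x => filter_subset _ _)
    (fun x => filter_subset _ _) (by
      intro Γ hΓ
      rcases Γ.eq_empty_or_nonempty with rfl | hne
      · simp
      have h1 : U.filter (fun x => Γ ⊆ F.filter (fun A => x ∈ A)) = famInter Γ := by
        ext x
        rw [mem_famInter Γ hne]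
        simp only [mem_filter, subset_iff]
        obtain ⟨A, hA⟩ := hne
        constructor
        · intro h B hB
          exact (h.2 hB).2
        · intro h
          exact ⟨hAU A (hΓ hA) (h A hA), fun B hB => ⟨hΓ hB, h B hB⟩⟩
      have h2 : U.filter (fun x => Γ ⊆ F.filter (fun A => x ∉ A)) = U \ famUnion Γ := by
        ext x
        rw [mem_sdiff, mem_famUnion]
        simp only [mem_filter, subset_iff]
        constructor
        · rintro ⟨h, h'⟩
          refine ⟨h, ?_⟩
          rintro ⟨B, hB, hx⟩
          exact (h' hB).2 hx
        · rintro ⟨h, h'⟩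
          exact ⟨h, fun B hB => ⟨hΓ hB, fun hx => h' ⟨B, hB, hx⟩⟩⟩
      have h3 : famUnion Γ ⊆ U := by
        intro x hx
        obtain ⟨A, hA, hx⟩ := (mem_famUnion Γ x).1 hx
        exact hAU A (hΓ hA) hx
      have h4 := hF.2 Γ hΓ hne
      rw [h1, h2, card_sdiff_of_subset h3]
      omega)
  obtain ⟨e, he⟩ := exists_fiber_equiv A0 (U \ A0) (fun x => F.filter (fun A => x ∈ A))
    (fun x => F.filter (fun A => x ∉ A)) (by
      intro S
      by_cases hS : S ⊆ F ∧ A0 ∈ S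
      · have := hfib _ S hS.1 rfl
        have e1 : A0.filter (fun x => F.filter (fun A => x ∈ A) = S) =
            U.filter (fun x => F.filter (fun A => x ∈ A) = S) := by
          ext x
          simp only [mem_filter]
          constructor
          · rintro ⟨h, h'⟩
            exact ⟨hAU A0 hA0 h, h'⟩
          · rintro ⟨h, h'⟩
            have := hS.2
            rw [← h', mem_filter] at this
            exact ⟨this.2, h'⟩
        have e2 : (U \ A0).filter (fun x => F.filter (fun A => x ∉ A) = S) =
            U.filter (fun x => F.filter (fun A => x ∉ A) = S) := by
          ext x
          simp only [mem_filter, mem_sdiff]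
          constructor
          · rintro ⟨h, h'⟩
            exact ⟨h.1, h'⟩
          · rintro ⟨h, h'⟩
            have := hS.2
            rw [← h', mem_filter] at this
            exact ⟨⟨h, this.2⟩, h'⟩
        rw [e1, e2, this]
      · rw [filter_false_of_mem, filter_false_of_mem]
        · rintro x hx rfl
          rw [mem_sdiff] at hx
          exact hS ⟨filter_subset _ _, mem_filter.2 ⟨hA0, hx.2⟩⟩
        · rintro x hx rfl
          exact hS ⟨filter_subset _ _, mem_filter.2 ⟨hA0, hx⟩⟩)
  have he' : ∀ x : A0, ∀ A ∈ F, ((x : ℕ) ∈ A ↔ (e x : ℕ) ∉ A) := by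
    intro x A hA
    have := congrArg (fun S => A ∈ S) (he x)
    simp only [mem_filter, hA, true_and] at this
    rw [this]
  let σ : ℕ → ℕ := fun x => if h : x ∈ A0 then e ⟨x, h⟩ else
    if h : x ∈ U \ A0 then e.symm ⟨x, h⟩ else x
  have s1 : ∀ x : A0, σ x = e x := by
    intro x
    simp [σ]
  have s2 : ∀ y : ↥(U \ A0), σ y = e.symm y := by
    intro y
    have := mem_sdiff.1 y.2
    simp [σ, this.1, this.2]
  have cases : ∀ x ∈ U, (∃ a : A0, (a : ℕ) = x) ∨ ∃ b : ↥(U \ A0), (b : ℕ) = x := by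
    intro x hx
    by_cases h : x ∈ A0
    · exact Or.inl ⟨⟨x, h⟩, rfl⟩
    · exact Or.inr ⟨⟨x, mem_sdiff.2 ⟨hx, h⟩⟩, rfl⟩
  refine ⟨U, σ, hUc, hAU, ?_, ?_, ?_⟩
  · intro x hx
    rcases cases x hx with ⟨a, rfl⟩ | ⟨b, rfl⟩
    · rw [s1]
      exact (mem_sdiff.1 (e a).2).1
    · rw [s2]
      exact hAU A0 hA0 (e.symm b).2
  · intro x hx
    rcases cases x hx with ⟨a, rfl⟩ | ⟨b, rfl⟩
    · rw [s1, s2]; simp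
    · rw [s2, s1]; simp
  · intro x hx A hA
    rcases cases x hx with ⟨a, rfl⟩ | ⟨b, rfl⟩
    · rw [s1]
      exact he' a A hA
    · rw [s2]
      have := he' (e.symm b) A hA
      rw [Equiv.apply_symm_apply] at this
      tauto

/-- for a maximal hke collection `F` with `α(F) = α`, the relation `≈` on
`⋃F` is an equivalence relation (it is reflexive by definition) with exactly `α`
equivalence classes, each of exactly two elements; `F` is exactly the collection of
subsets `B` of `⋃F` with `|B| = α` meeting every `≈`-class; and `|⋃F| = 2α`. -/
theorem approxRel_equivalence_of_isMaxHKE (F : Finset (Finset ℕ)) (α : ℕ)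
    (hF : IsHKE F α) (hmax : IsMaxHKE F) :
    (∀ x ∈ famUnion F, ∀ y ∈ famUnion F, ApproxRel F x y → ApproxRel F y x) ∧
    (∀ x ∈ famUnion F, ∀ y ∈ famUnion F, ∀ z ∈ famUnion F,
      ApproxRel F x y → ApproxRel F y z → ApproxRel F x z) ∧
    ((famUnion F).image
      (fun x => (famUnion F).filter (fun y => ApproxRel F x y))).card = α ∧
    (∀ x ∈ famUnion F, ((famUnion F).filter (fun y => ApproxRel F x y)).card = 2) ∧
    F = (famUnion F).powerset.filter
      (fun B => B.card = α ∧ ∀ x ∈ famUnion F, ∃ y ∈ B, ApproxRel F x y) ∧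
    (famUnion F).card = 2 * α := by
  obtain ⟨A0, hA0⟩ : F.Nonempty := by
    rw [nonempty_iff_ne_empty]
    rintro rfl
    refine hmax.2 {{0}} (by simp) ⟨1, one_pos, ?_⟩
    intro Γ hΓ hne
    obtain rfl : Γ = {{0}} := (subset_singleton_iff.1 hΓ).resolve_left hne.ne_empty
    decide
  obtain ⟨U, σ, hUc, hAU, hσU, hσσ, hσ⟩ := exists_pairing F α hF A0 hA0
  obtain ⟨T, hTdef⟩ : ∃ T, T = U.powerset.filter (fun B => ∀ x ∈ U, (x ∈ B ↔ σ x ∉ B)) := ⟨_, rfl⟩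
  have hT : ∀ B, B ∈ T ↔ B ⊆ U ∧ ∀ x ∈ U, (x ∈ B ↔ σ x ∉ B) := by
    intro B
    rw [hTdef, mem_filter, mem_powerset]
  have hFT : F ⊆ T := fun A hA => (hT A).2 ⟨hAU A hA, fun x hx => hσ x hx A hA⟩
  have hTh : IsHKE T α := by
    refine ⟨hF.1, fun Γ hΓ hne => ?_⟩
    have h3 : famUnion Γ ⊆ U := by
      intro x hx
      obtain ⟨A, hA, hx⟩ := (mem_famUnion Γ x).1 hx
      exact ((hT A).1 (hΓ hA)).1 hx
    have hI : famInter Γ ⊆ U := by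
      intro x hx
      rw [mem_famInter Γ hne] at hx
      obtain ⟨A, hA⟩ := hne
      exact ((hT A).1 (hΓ hA)).1 (hx A hA)
    have h4 : (famInter Γ).card = (U \ famUnion Γ).card := by
      apply card_bij' (fun x _ => σ x) (fun x _ => σ x)
      · intro x hx
        have hxU := hI hx
        rw [mem_famInter Γ hne] at hx
        rw [mem_sdiff, mem_famUnion]
        refine ⟨hσU x hxU, ?_⟩
        rintro ⟨A, hA, h⟩
        exact (((hT A).1 (hΓ hA)).2 x hxU).1 (hx A hA) h
      · intro x hx
        rw [mem_sdiff, mem_famUnion] at hx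
        rw [mem_famInter Γ hne]
        intro A hA
        by_contra h
        exact hx.2 ⟨A, hA, (((hT A).1 (hΓ hA)).2 x hx.1).2 h⟩
      · intro x hx
        exact hσσ x (hI hx)
      · intro x hx
        exact hσσ x (mem_sdiff.1 hx).1
    rw [card_sdiff_of_subset h3] at h4
    have := card_le_card h3
    omega
  have hEq : F = T := by
    by_contra h
    exact hmax.2 T (Finset.ssubset_iff_subset_ne.2 ⟨hFT, h⟩) ⟨α, hTh⟩
  have hcompl : ∀ A ∈ F, U \ A ∈ F := by
    intro A hA
    rw [hEq, hT]
    refine ⟨sdiff_subset, fun x hx => ?_⟩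
    have := hσ x hx A hA
    have := hσU x hx
    simp only [mem_sdiff]
    tauto
  have hFU : famUnion F = U := by
    apply Subset.antisymm
    · intro x hx
      obtain ⟨A, hA, hx⟩ := (mem_famUnion F x).1 hx
      exact hAU A hA hx
    · intro x hx
      rw [mem_famUnion]
      by_cases h : x ∈ A0
      · exact ⟨A0, hA0, h⟩
      · exact ⟨_, hcompl A0 hA0, mem_sdiff.2 ⟨hx, h⟩⟩
  have hcard : ∀ A ∈ F, A.card = α := by
    intro A hA
    have := hF.2 {A} (by simpa using hA) (by simp)
    have e1 : famUnion {A} = A := by ext x; simp [mem_famUnion]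
    have e2 : famInter {A} = A := by ext x; simp [mem_famInter]
    rw [e1, e2] at this
    omega
  have hne : ∀ x ∈ U, σ x ≠ x := by
    intro x hx h
    have := hσ x hx A0 hA0
    rw [h] at this
    tauto
  have hrel : ∀ x ∈ U, ∀ y, ApproxRel F x y ↔ y = x ∨ y = σ x := by
    intro x hx y
    constructor
    · rintro (rfl | ⟨A, hA, D, hD, h1, h2⟩)
      · exact Or.inl rfl
      · right
        have hx' : x ∈ A \ D := by rw [h1]; simp
        rw [mem_sdiff] at hx'
        have h3 := hσ x hx A hA
        have h4 := hσ x hx D hD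
        have : σ x ∈ D \ A := by rw [mem_sdiff]; tauto
        rw [h2, mem_singleton] at this
        exact this.symm
    · rintro (rfl | rfl)
      · exact Or.inl rfl
      · right
        obtain ⟨A, hA, hxA⟩ := (mem_famUnion F x).1 (hFU ▸ hx)
        have hsA : σ x ∉ A := (hσ x hx A hA).1 hxA
        have hsx := hne x hx
        refine ⟨A, hA, insert (σ x) (A.erase x), ?_, ?_, ?_⟩
        · rw [hEq, hT]
          constructor
          · intro z hz
            rw [mem_insert, mem_erase] at hz
            rcases hz with rfl | hz
            · exact hσU x hx
            · exact hAU A hA hz.2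
          · intro z hz
            have h1 := hσ z hz A hA
            have h2 : σ z = σ x → z = x := fun h => by rw [← hσσ z hz, h, hσσ x hx]
            have h3 : σ z = x → z = σ x := fun h => by rw [← h, hσσ z hz]
            have h4 : z = σ x → σ z = x := fun h => by rw [h, hσσ x hx]
            simp only [mem_insert, mem_erase]
            grind
        · ext z
          simp only [mem_sdiff, mem_insert, mem_erase, mem_singleton]
          grind
        · ext z
          simp only [mem_sdiff, mem_insert, mem_erase, mem_singleton]
          grind
  have hcls : ∀ x ∈ U, U.filter (fun y => ApproxRel F x y) = {x, σ x} := by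
    intro x hx
    ext y
    rw [mem_filter, hrel x hx, mem_insert, mem_singleton]
    have := hσU x hx
    grind
  rw [hFU]
  refine ⟨?_, ?_, ?_, ?_, ?_, hUc⟩
  · intro x hx y hy
    rw [hrel x hx, hrel y hy]
    have := hσσ x hx
    grind
  · intro x hx y hy z hz
    rw [hrel x hx, hrel y hy, hrel x hx]
    have := hσσ x hx
    grind
  · have : U.image (fun x => U.filter (fun y => ApproxRel F x y)) =
        A0.image (fun x => ({x, σ x} : Finset ℕ)) := by
      ext S
      simp only [mem_image]
      constructor
      · rintro ⟨x, hx, rfl⟩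
        rw [hcls x hx]
        by_cases h : x ∈ A0
        · exact ⟨x, h, rfl⟩
        · refine ⟨σ x, ?_, ?_⟩
          · have := hσ x hx A0 hA0
            tauto
          · rw [hσσ x hx, pair_comm]
      · rintro ⟨x, hx, rfl⟩
        exact ⟨x, hAU A0 hA0 hx, hcls x (hAU A0 hA0 hx)⟩
    rw [this, card_image_of_injOn, hcard A0 hA0]
    intro x hx y hy hxy
    simp only at hxy
    have h1 : x ∈ ({y, σ y} : Finset ℕ) := by rw [← hxy]; simp
    rw [mem_insert, mem_singleton] at h1
    rcases h1 with h1 | h1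
    · exact h1
    · have := (hσ y (hAU A0 hA0 hy) A0 hA0).1 hy
      rw [← h1] at this
      exact absurd hx this
  · intro x hx
    rw [hcls x hx, card_pair (hne x hx).symm]
  · ext B
    rw [mem_filter, mem_powerset]
    constructor
    · intro hB
      refine ⟨hAU B hB, hcard B hB, fun x hx => ?_⟩
      by_cases h : x ∈ B
      · exact ⟨x, h, Or.inl rfl⟩
      · refine ⟨σ x, ?_, (hrel x hx _).2 (Or.inr rfl)⟩
        have := hσ x hx B hB
        tauto
    · rintro ⟨hBU, hBc, hB⟩
      have hB' : ∀ x ∈ U, x ∉ B → σ x ∈ B := by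
        intro x hx hxB
        obtain ⟨y, hy, h⟩ := hB x hx
        rw [hrel x hx] at h
        rcases h with rfl | rfl
        · exact absurd hy hxB
        · exact hy
      have himg : (U \ B).image σ = B := by
        apply eq_of_subset_of_card_le
        · intro z hz
          obtain ⟨x, hx, rfl⟩ := mem_image.1 hz
          rw [mem_sdiff] at hx
          exact hB' x hx.1 hx.2
        · rw [card_image_of_injOn, card_sdiff_of_subset hBU]
          · omega
          · intro x hx y hy hxy
            have hx := (mem_sdiff.1 hx).1
            have hy := (mem_sdiff.1 hy).1
            rw [← hσσ x hx, hxy, hσσ y hy]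
      rw [hEq, hT]
      refine ⟨hBU, fun x hx => ⟨fun hxB => ?_, fun h => ?_⟩⟩
      · rw [← himg] at hxB
        obtain ⟨z, hz, rfl⟩ := mem_image.1 hxB
        rw [mem_sdiff] at hz
        rw [hσσ z hz.1]
        exact hz.2
      · by_contra hxB
        exact h (hB' x hx hxB)
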